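/- Fix b > 0, ε̂ > 0, τ ∈ ℝ, and let H, H_*, F_1, F_2, F_3, F_4, g, and Ω_{ε,τ} be as defined. Then g(Ω_{ε,τ}) = Ω_{ε,τ}; that is, σ ∈ Ω_{ε,τ} if and only if g(σ) ∈ Ω_{ε,τ}. -/

import Mathlib

/-!
The map `g` permutes the defining inequalities of `Ω`. It permutes the order constraints
`0 < σ2 < σ1 < σ3 < τ` among themselves, and it cycles the four functions:
`F1 ∘ g = F4`, `F2 ∘ g = F1`, `F3 ∘ g = F2`, `F4 ∘ g = F3`. Hence `σ ∈ Ω ↔ g σ ∈ Ω`, and as `g` is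
an invertible affine map this gives `g(Ω) = Ω`. Nothing about `H` or `H_*` enters.
-/

/-- The single-pulse map `H(θ) = e^{bε̂}·θ + (e^{bε̂} − 1)/(e^b − 1)`. -/
noncomputable def Hmap (b εh θ : ℝ) : ℝ :=
  Real.exp (b * εh) * θ + (Real.exp (b * εh) - 1) / (Real.exp b - 1)

/-- The threshold value `H_* = (e^b − e^{bε̂})/((e^b − 1)·e^{bε̂})`. -/
noncomputable def Hstar (b εh : ℝ) : ℝ :=
  (Real.exp b - Real.exp (b * εh)) / ((Real.exp b - 1) * Real.exp (b * εh))

noncomputable def F1 (b εh τ : ℝ) (σ : ℝ × ℝ × ℝ) : ℝ := Hmap b εh σ.1 + τ - σ.2.2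
noncomputable def F2 (b εh τ : ℝ) (σ : ℝ × ℝ × ℝ) : ℝ :=
  Hmap b εh (τ - σ.2.2 + σ.2.1) + σ.2.2 - σ.1
noncomputable def F3 (b εh τ : ℝ) (σ : ℝ × ℝ × ℝ) : ℝ := Hmap b εh (τ - σ.1) + σ.1 - σ.2.1
noncomputable def F4 (b εh τ : ℝ) (σ : ℝ × ℝ × ℝ) : ℝ := Hmap b εh (σ.2.2 - σ.2.1) + σ.2.1

/-- The affine map `g(σ1, σ2, σ3) = (σ3 − σ2, σ1 − σ2, τ − σ2)`. -/
def gmap (τ : ℝ) (σ : ℝ × ℝ × ℝ) : ℝ × ℝ × ℝ := (σ.2.2 - σ.2.1, σ.1 - σ.2.1, τ - σ.2.1)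

/-- The set `Ω_{ε,τ}` defining the isochronous region IR4. -/
noncomputable def Omega (b εh τ : ℝ) : Set (ℝ × ℝ × ℝ) :=
  {σ | (0 < σ.2.1 ∧ σ.2.1 < σ.1 ∧ σ.1 < σ.2.2 ∧ σ.2.2 < τ) ∧
    (Hstar b εh ≤ F1 b εh τ σ ∧ F1 b εh τ σ ≤ 1) ∧
    (Hstar b εh ≤ F2 b εh τ σ ∧ F2 b εh τ σ ≤ 1) ∧
    (Hstar b εh ≤ F3 b εh τ σ ∧ F3 b εh τ σ ≤ 1) ∧
    (Hstar b εh ≤ F4 b εh τ σ ∧ F4 b εh τ σ ≤ 1)}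

theorem F1_gmap (b εh τ : ℝ) (σ : ℝ × ℝ × ℝ) : F1 b εh τ (gmap τ σ) = F4 b εh τ σ := by
  simp only [F1, F4, gmap, Hmap]; ring

theorem F2_gmap (b εh τ : ℝ) (σ : ℝ × ℝ × ℝ) : F2 b εh τ (gmap τ σ) = F1 b εh τ σ := by
  simp only [F2, F1, gmap, Hmap]; ring

theorem F3_gmap (b εh τ : ℝ) (σ : ℝ × ℝ × ℝ) : F3 b εh τ (gmap τ σ) = F2 b εh τ σ := by
  simp only [F3, F2, gmap, Hmap]; ring

theorem F4_gmap (b εh τ : ℝ) (σ : ℝ × ℝ × ℝ) : F4 b εh τ (gmap τ σ) = F3 b εh τ σ := by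
  simp only [F4, F3, gmap, Hmap]; ring

theorem gmap_mem_Omega_iff (b εh τ : ℝ) (σ : ℝ × ℝ × ℝ) :
    gmap τ σ ∈ Omega b εh τ ↔ σ ∈ Omega b εh τ := by
  simp only [Omega, Set.mem_ofPred_eq, F1_gmap, F2_gmap, F3_gmap, F4_gmap]
  have order : (0 < (gmap τ σ).2.1 ∧ (gmap τ σ).2.1 < (gmap τ σ).1 ∧
      (gmap τ σ).1 < (gmap τ σ).2.2 ∧ (gmap τ σ).2.2 < τ) ↔
      (0 < σ.2.1 ∧ σ.2.1 < σ.1 ∧ σ.1 < σ.2.2 ∧ σ.2.2 < τ) := by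
    simp only [gmap]
    constructor <;> rintro ⟨h1, h2, h3, h4⟩ <;> refine ⟨?_, ?_, ?_, ?_⟩ <;> linarith
  rw [order]
  tauto

theorem gmap_surjective (τ : ℝ) : Function.Surjective (gmap τ) := by
  rintro ⟨x, y, z⟩
  -- The third coordinate forces `σ2 = τ - z`; the other two are then determined.
  refine ⟨(y + (τ - z), τ - z, x + (τ - z)), ?_⟩
  simp [gmap]

theorem stmt_9 (b εh τ : ℝ) (hb : 0 < b) (hεh : 0 < εh) :
    gmap τ '' Omega b εh τ = Omega b εh τ ∧
    (∀ σ : ℝ × ℝ × ℝ, σ ∈ Omega b εh τ ↔ gmap τ σ ∈ Omega b εh τ) := by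
  refine ⟨?_, fun σ => (gmap_mem_Omega_iff b εh τ σ).symm⟩
  have preimage_eq : gmap τ ⁻¹' Omega b εh τ = Omega b εh τ :=
    Set.ext (gmap_mem_Omega_iff b εh τ)
  conv_lhs => rw [← preimage_eq]
  exact Set.image_preimage_eq _ (gmap_surjective τ)
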